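/- arXiv:2207.02713 — 2 statements merged into one kernel-verified Lean document; each statement's English description precedes it below -/
import Mathlib

section
/- For every ν > 1 and every x > 0, K_{ν+1}(x)/K_ν(x) < (ν + √(ν² + (ν/(ν − 1))·x²))/x. -/
/-- The modified Bessel function of the second kind,
`K_ν(x) = ∫_0^∞ e^{-x cosh t} cosh(ν t) dt`. -/
noncomputable def besselK (ν x : ℝ) : ℝ :=
  ∫ t in Set.Ioi (0 : ℝ), Real.exp (-x * Real.cosh t) * Real.cosh (ν * t)

/-!
The recurrence `x (K_{ν+1} - K_{ν-1}) = 2 ν K_ν`, used at `ν` and at `ν - 1`, gives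
`ν K_ν² - (ν - 1) K_{ν-1} K_{ν+1} = (x / 2) (K_{ν-2} K_{ν+1} - K_{ν-1} K_ν)`, whose right-hand side
is positive because `ν ↦ K_ν(x)` is strictly log-convex. Hence
`K_{ν-1} K_{ν+1} < ν / (ν - 1) K_ν²`. By the recurrence the ratio `q = K_{ν+1} / K_ν` satisfies
`(x q - ν)² = ν² + x² K_{ν-1} K_{ν+1} / K_ν²`, and the bound follows on taking square roots.
-/

open Filter MeasureTheory Real Set Topology

theorem setIntegral_pos_of_forall_pos {α : Type*} [MeasurableSpace α] {μ : Measure α} {s : Set α}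
    {f : α → ℝ} (hs : MeasurableSet s) (hμs : μ s ≠ 0) (hf : IntegrableOn f s μ)
    (hpos : ∀ t ∈ s, 0 < f t) : 0 < ∫ t in s, f t ∂μ := by
  have hsupport : Function.support f ∩ s = s :=
    inter_eq_right.2 fun t ht => (hpos t ht).ne'
  rw [setIntegral_pos_iff_support_of_nonneg_ae _ hf, hsupport]
  · exact pos_iff_ne_zero.2 hμs
  · exact ae_restrict_of_forall_mem hs fun t ht => (hpos t ht).le

section

variable {x : ℝ}

theorem tendsto_exp_neg_mul_cosh_mul_exp_atTop (hx : 0 < x) (p : ℝ) :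
    Tendsto (fun t => exp (-x * cosh t) * exp (p * t)) atTop (𝓝 0) := by
  -- Substitute `u = exp t` in `u ^ p * exp (-(x / 2) * u) → 0`.
  have hexp : Tendsto (fun t => exp t ^ p * exp (-(x / 2) * exp t)) atTop (𝓝 0) :=
    (tendsto_rpow_mul_exp_neg_mul_atTop_nhds_zero p (x / 2) (half_pos hx)).comp tendsto_exp_atTop
  refine squeeze_zero (fun t => by positivity) (fun t => ?_) hexp
  have hcosh : exp t / 2 ≤ cosh t := by
    rw [cosh_eq]
    linarith [exp_pos (-t)]
  calc exp (-x * cosh t) * exp (p * t) ≤ exp (-(x / 2) * exp t) * exp (p * t) :=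
        mul_le_mul_of_nonneg_right (exp_le_exp.2 (by nlinarith)) (exp_pos _).le
    _ = exp t ^ p * exp (-(x / 2) * exp t) := by rw [← exp_mul, mul_comm t p, mul_comm]

theorem tendsto_exp_neg_mul_cosh_mul_sinh_atTop (hx : 0 < x) (ν : ℝ) :
    Tendsto (fun t => exp (-x * cosh t) * sinh (ν * t)) atTop (𝓝 0) := by
  have hdiff := ((tendsto_exp_neg_mul_cosh_mul_exp_atTop hx ν).sub
    (tendsto_exp_neg_mul_cosh_mul_exp_atTop hx (-ν))).div_const 2
  rw [sub_zero, zero_div] at hdiff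
  refine hdiff.congr fun t => ?_
  rw [sinh_eq, neg_mul ν t]
  ring

theorem integrableOn_exp_neg_mul_cosh_mul_exp (hx : 0 < x) (p : ℝ) :
    IntegrableOn (fun t => exp (-x * cosh t) * exp (p * t)) (Ioi 0) := by
  refine integrable_of_isBigO_exp_neg one_pos (by fun_prop) (Asymptotics.IsLittleO.isBigO ?_)
  refine (Asymptotics.isLittleO_iff_tendsto' (.of_forall fun t h => absurd h (exp_ne_zero _))).2 ?_
  refine (tendsto_exp_neg_mul_cosh_mul_exp_atTop hx (p + 1)).congr fun t => ?_
  rw [mul_div_assoc, ← exp_sub]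
  ring_nf

theorem integrableOn_exp_neg_mul_cosh_mul_cosh (hx : 0 < x) (ν : ℝ) :
    IntegrableOn (fun t => exp (-x * cosh t) * cosh (ν * t)) (Ioi 0) := by
  refine (((integrableOn_exp_neg_mul_cosh_mul_exp hx ν).fun_add
    (integrableOn_exp_neg_mul_cosh_mul_exp hx (-ν))).div_const 2).congr (.of_forall fun t => ?_)
  simp only [cosh_eq (ν * t), neg_mul ν t]
  ring

theorem besselK_pos (hx : 0 < x) (ν : ℝ) : 0 < besselK ν x :=
  setIntegral_pos_of_forall_pos measurableSet_Ioi (by simp)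
    (integrableOn_exp_neg_mul_cosh_mul_cosh hx ν) fun _ _ => by positivity

theorem hasDerivAt_exp_neg_mul_cosh_mul_sinh (x ν t : ℝ) :
    HasDerivAt (fun t => exp (-x * cosh t) * sinh (ν * t))
      (ν * (exp (-x * cosh t) * cosh (ν * t))
        - x / 2 * (exp (-x * cosh t) * cosh ((ν + 1) * t)
          - exp (-x * cosh t) * cosh ((ν - 1) * t))) t := by
  have hexp := ((hasDerivAt_cosh t).const_mul (-x)).exp
  have hsinh := ((hasDerivAt_id t).const_mul ν).sinh
  refine (hexp.mul hsinh).congr_deriv ?_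
  rw [add_mul, sub_mul, one_mul, cosh_add, cosh_sub, id]
  ring

theorem besselK_recurrence (hx : 0 < x) (ν : ℝ) :
    x * (besselK (ν + 1) x - besselK (ν - 1) x) = 2 * ν * besselK ν x := by
  have hint := integrableOn_exp_neg_mul_cosh_mul_cosh hx
  have hmid := (hint ν).const_mul ν
  have hdiff := ((hint (ν + 1)).fun_sub (hint (ν - 1))).const_mul (x / 2)
  have hftc := integral_Ioi_of_hasDerivAt_of_tendsto'
    (fun t _ => hasDerivAt_exp_neg_mul_cosh_mul_sinh x ν t)
    (hmid.sub hdiff) (tendsto_exp_neg_mul_cosh_mul_sinh_atTop hx ν)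
  rw [integral_sub hmid hdiff, integral_const_mul, integral_const_mul,
    integral_sub (hint (ν + 1)) (hint (ν - 1)), mul_zero, sinh_zero, mul_zero, sub_zero] at hftc
  unfold besselK
  linarith

-- Coefficients are laid out as in `discrim_lt_zero`, which is applied to the integrated form.
theorem quadratic_cosh_pos {d t : ℝ} (hd : d ≠ 0) (ht : t ≠ 0) (ν r : ℝ) :
    0 < cosh ((ν - d) * t) * (r * r) + -2 * cosh (ν * t) * r + cosh ((ν + d) * t) := by
  have hfactor (s : ℝ) : exp ((ν - d) * s) * (exp (d * s) - r) ^ 2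
      = exp ((ν - d) * s) * (r * r) - 2 * exp (ν * s) * r + exp ((ν + d) * s) := by
    have hν : exp (ν * s) = exp ((ν - d) * s) * exp (d * s) := by rw [← exp_add]; ring_nf
    have hνd : exp ((ν + d) * s) = exp ((ν - d) * s) * exp (d * s) ^ 2 := by
      rw [← exp_nat_mul, ← exp_add]; push_cast; ring_nf
    rw [hν, hνd]
    ring
  have hsum : cosh ((ν - d) * t) * (r * r) + -2 * cosh (ν * t) * r + cosh ((ν + d) * t)
      = (exp ((ν - d) * t) * (exp (d * t) - r) ^ 2
        + exp ((ν - d) * -t) * (exp (d * -t) - r) ^ 2) / 2 := by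
    rw [hfactor, hfactor]
    simp only [cosh_eq, mul_neg]
    ring
  rw [hsum]
  -- The two squares cannot vanish together, since `exp (d * t) ≠ exp (-(d * t))`.
  rcases ne_or_eq (exp (d * t)) r with hr | rfl
  · have := sub_ne_zero.2 hr
    positivity
  · have : exp (d * -t) - exp (d * t) ≠ 0 := by
      rw [sub_ne_zero, Ne, exp_eq_exp, mul_neg, neg_eq_self]
      exact mul_ne_zero hd ht
    positivity

theorem quadratic_besselK_pos (hx : 0 < x) {d : ℝ} (hd : d ≠ 0) (ν r : ℝ) :
    0 < besselK (ν - d) x * (r * r) + -2 * besselK ν x * r + besselK (ν + d) x := by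
  have hint := integrableOn_exp_neg_mul_cosh_mul_cosh hx
  have hlow := (hint (ν - d)).mul_const (r * r)
  have hmid := ((hint ν).const_mul (-2)).mul_const r
  have hpos : 0 < ∫ t in Ioi 0, (exp (-x * cosh t) * cosh ((ν - d) * t) * (r * r)
      + -2 * (exp (-x * cosh t) * cosh (ν * t)) * r + exp (-x * cosh t) * cosh ((ν + d) * t)) := by
    refine setIntegral_pos_of_forall_pos measurableSet_Ioi (by simp)
      ((hlow.fun_add hmid).fun_add (hint (ν + d))) fun t ht => ?_
    have := mul_pos (exp_pos (-x * cosh t)) (quadratic_cosh_pos hd (ne_of_gt ht) ν r)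
    linarith
  rwa [integral_add (hlow.fun_add hmid) (hint (ν + d)), integral_add hlow hmid, integral_mul_const,
    integral_mul_const, integral_const_mul] at hpos

theorem besselK_sq_lt_mul (hx : 0 < x) {d : ℝ} (hd : d ≠ 0) (ν : ℝ) :
    besselK ν x ^ 2 < besselK (ν - d) x * besselK (ν + d) x := by
  have hdiscrim := discrim_lt_zero (besselK_pos hx (ν - d)).ne' (quadratic_besselK_pos hx hd ν)
  rw [discrim] at hdiscrim
  linarith

theorem besselK_mul_lt_mul (hx : 0 < x) (ν : ℝ) :
    besselK (ν - 1) x * besselK ν x < besselK (ν - 2) x * besselK (ν + 1) x := by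
  have hpos := besselK_pos hx
  have hν := besselK_sq_lt_mul hx one_ne_zero ν
  have hpred := besselK_sq_lt_mul hx one_ne_zero (ν - 1)
  rw [sub_add_cancel, sub_sub, one_add_one_eq_two] at hpred
  refine lt_of_mul_lt_mul_left ?_ (mul_pos (hpos (ν - 1)) (hpos ν)).le
  calc besselK (ν - 1) x * besselK ν x * (besselK (ν - 1) x * besselK ν x)
      = besselK (ν - 1) x ^ 2 * besselK ν x ^ 2 := by ring
    _ < besselK (ν - 2) x * besselK ν x * (besselK (ν - 1) x * besselK (ν + 1) x) :=
        mul_lt_mul'' hpred hν (sq_nonneg _) (sq_nonneg _)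
    _ = besselK (ν - 1) x * besselK ν x * (besselK (ν - 2) x * besselK (ν + 1) x) := by ring

theorem besselK_turan (hx : 0 < x) (ν : ℝ) :
    (ν - 1) * (besselK (ν - 1) x * besselK (ν + 1) x) < ν * besselK ν x ^ 2 := by
  have hrec := besselK_recurrence hx ν
  have hrec_pred := besselK_recurrence hx (ν - 1)
  rw [sub_add_cancel, sub_sub, one_add_one_eq_two] at hrec_pred
  have hgap : ν * besselK ν x ^ 2 - (ν - 1) * (besselK (ν - 1) x * besselK (ν + 1) x)
      = x / 2 * (besselK (ν - 2) x * besselK (ν + 1) x - besselK (ν - 1) x * besselK ν x) := by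
    linear_combination besselK (ν + 1) x / 2 * hrec_pred - besselK ν x / 2 * hrec
  have := mul_pos (half_pos hx) (sub_pos.2 (besselK_mul_lt_mul hx ν))
  linarith

theorem sq_mul_besselK_ratio_sub (hx : 0 < x) (ν : ℝ) :
    (x * (besselK (ν + 1) x / besselK ν x) - ν) ^ 2
      = ν ^ 2 + besselK (ν - 1) x * besselK (ν + 1) x / besselK ν x ^ 2 * x ^ 2 := by
  have hne := (besselK_pos hx ν).ne'
  field_simp
  linear_combination x * besselK (ν + 1) x * besselK_recurrence hx ν

end

theorem besselK_ratio_upper_bound_20 (ν x : ℝ) (hν : 1 < ν) (hx : 0 < x) :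
    besselK (ν + 1) x / besselK ν x <
      (ν + Real.sqrt (ν ^ 2 + (ν / (ν - 1)) * x ^ 2)) / x := by
  have hturan : besselK (ν - 1) x * besselK (ν + 1) x / besselK ν x ^ 2 < ν / (ν - 1) := by
    rw [div_lt_div_iff₀ (pow_pos (besselK_pos hx ν) 2) (sub_pos.2 hν), mul_comm]
    exact besselK_turan hx ν
  have hsqrt : x * (besselK (ν + 1) x / besselK ν x) - ν
      < √(ν ^ 2 + ν / (ν - 1) * x ^ 2) := by
    apply lt_sqrt_of_sq_lt
    rw [sq_mul_besselK_ratio_sub hx]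
    gcongr
  rw [lt_div_iff₀' hx]
  linarith
end

section
/- For every ν ≥ 0, every λ ∈ [1/2, 2] and every x > 0, I_{ν−1}(x)/I_ν(x) < (ν − λ + √((ν + λ)² + c·x²))/x, where c = (ν + λ)/(ν − λ + 2√(2λ) − 1). -/
/-- The modified Bessel function of the first kind,
`I_ν(x) = ∑_{k=0}^∞ (x/2)^{2k+ν} / (k! Γ(k+ν+1))`
(here `1/Γ` vanishes at nonpositive integer arguments, since `Real.Gamma` is `0` there). -/
noncomputable def besselI (ν x : ℝ) : ℝ :=
  ∑' k : ℕ, (x / 2) ^ (2 * (k : ℝ) + ν) / ((Nat.factorial k : ℝ) * Real.Gamma ((k : ℝ) + ν + 1))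

/-! The Bessel–Clifford function `C_ν(t) = ∑ t^k / (k! Γ(k+ν+1))` satisfies `C_ν' = C_{ν+1}`,
`(t^{ν+1} C_{ν+1})' = t^ν C_ν` and `I_ν(x) = (x/2)^ν C_ν(x²/4)`. Hence `r = C_{ν+1}/C_ν` solves the
Riccati equation `t r' + (ν+1) r + t r² = 1`, and every continuous supersolution `b` lies above `r`:
the function `t^{ν+1} (b C_ν - C_{ν+1}) exp (∫ b)` vanishes at `0`, and its derivative is
`t^ν C_ν exp (∫ b)` times the defect `t b' + (ν+1) b + t b² - 1`.

With `a = ν + λ`, `m = √(2λ)`, `d = ν - λ + 2m - 1`, `c = a/d` and `s = √(a² + 4ct)`, the bound in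
the theorem amounts to `r < b` for `b = 2c/(s+a)`, the root of `t b² + a b = c`. The choice of `c`
completes a square in the defect of `b`, which equals `((m-1)s - a)² / (d s (s+a))` and so vanishes
for at most one `t > 0`. -/

open Set Filter
open scoped Nat

section ExponentialGeneratingFunction

variable {c : ℕ → ℝ} {M : ℝ}

theorem summable_mul_pow_div_factorial (hc : ∀ k, |c k| ≤ M) (t : ℝ) :
    Summable fun k : ℕ => c k * (t ^ k / k !) := by
  refine .of_norm_bounded ((Real.summable_pow_div_factorial |t|).mul_left M) fun k => ?_
  rw [norm_mul, norm_div, norm_pow, Real.norm_natCast, Real.norm_eq_abs, Real.norm_eq_abs]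
  gcongr
  exact hc k

theorem add_one_mul_pow_div_factorial_add_one (t : ℝ) (k : ℕ) :
    ((k + 1 : ℕ) : ℝ) * t ^ (k + 1 - 1) / (k + 1)! = t ^ k / k ! := by
  rw [Nat.factorial_succ, Nat.cast_mul, Nat.add_sub_cancel]
  exact mul_div_mul_left _ _ (by positivity)

theorem hasSum_mul_deriv_pow_div_factorial (hc : ∀ k, |c k| ≤ M) (t : ℝ) :
    HasSum (fun k : ℕ => c k * (k * t ^ (k - 1) / k !)) (∑' k : ℕ, c (k + 1) * (t ^ k / k !)) := by
  rw [← hasSum_nat_add_iff' 1]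
  simp only [add_one_mul_pow_div_factorial_add_one]
  simpa using (summable_mul_pow_div_factorial (fun k => hc (k + 1)) t).hasSum

theorem hasSum_natCast_mul_pow_div_factorial (hc : ∀ k, |c k| ≤ M) (t : ℝ) :
    HasSum (fun k : ℕ => k * (c k * (t ^ k / k !))) (t * ∑' k : ℕ, c (k + 1) * (t ^ k / k !)) := by
  refine ((hasSum_mul_deriv_pow_div_factorial hc t).mul_left t).congr_fun fun k => ?_
  rcases k with _ | k
  · simp
  · rw [Nat.add_sub_cancel, pow_succ]
    ring

theorem hasDerivAt_tsum_mul_pow_div_factorial (hc : ∀ k, |c k| ≤ M) (t : ℝ) :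
    HasDerivAt (fun y => ∑' k : ℕ, c k * (y ^ k / k !)) (∑' k : ℕ, c (k + 1) * (t ^ k / k !))
      t := by
  have hM : 0 ≤ M := (abs_nonneg _).trans (hc 0)
  have hu : Summable fun k : ℕ => M * (k * (|t| + 1) ^ (k - 1) / k !) :=
    (hasSum_mul_deriv_pow_div_factorial (fun _ => (abs_of_nonneg hM).le) (|t| + 1)).summable
  rw [← (hasSum_mul_deriv_pow_div_factorial hc t).tsum_eq]
  refine hasDerivAt_tsum_of_isPreconnected (t := Metric.ball 0 (|t| + 1)) (y₀ := t) hu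
    Metric.isOpen_ball (convex_ball _ _).isPreconnected
    (fun k y _ => ((hasDerivAt_pow k y).div_const _).const_mul (c k)) (fun k y hy => ?_)
    (by simp) (summable_mul_pow_div_factorial hc t) (by simp)
  have hy' : |y| ≤ |t| + 1 := (mem_ball_zero_iff.1 hy).le
  rw [norm_mul, norm_div, norm_mul, norm_pow, Real.norm_natCast, Real.norm_natCast,
    Real.norm_eq_abs, Real.norm_eq_abs]
  gcongr
  exact hc k

end ExponentialGeneratingFunction

theorem Gamma_inv_eq_mul_Gamma_add_one_inv (s : ℝ) :
    (Real.Gamma s)⁻¹ = s * (Real.Gamma (s + 1))⁻¹ := by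
  rcases eq_or_ne s 0 with rfl | hs
  · simp [Real.Gamma_zero]
  · rw [Real.Gamma_add_one hs, mul_inv, mul_inv_cancel_left₀ hs]

theorem exists_forall_abs_Gamma_natCast_add_inv_le (s : ℝ) :
    ∃ M, ∀ k : ℕ, |(Real.Gamma (k + s))⁻¹| ≤ M := by
  have hev : ∀ᶠ k : ℕ in atTop, |(Real.Gamma (k + s))⁻¹| ≤ 1 := by
    filter_upwards [tendsto_natCast_atTop_atTop.eventually_ge_atTop (2 - s)] with k hk
    have hk2 : 2 ≤ k + s := by linarith
    have hΓ : 1 ≤ Real.Gamma (k + s) := by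
      simpa only [Real.Gamma_two] using
        Real.Gamma_strictMonoOn_Ici.monotoneOn self_mem_Ici (mem_Ici.2 hk2) hk2
    rw [abs_of_pos (by positivity)]
    exact inv_le_one_of_one_le₀ hΓ
  obtain ⟨M, hM⟩ := IsBoundedUnder.bddAbove_range ⟨1, eventually_map.2 hev⟩
  exact ⟨M, fun k => hM (mem_range_self k)⟩

/-- The Bessel–Clifford function `C_ν(t) = ∑ t^k / (k! Γ(k+ν+1))`, the entire part of the Bessel
function `I_ν`. As in `besselI`, the terms with `k + ν + 1` a nonpositive integer vanish because
`Real.Gamma` is `0` there. -/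
noncomputable def besselClifford (ν t : ℝ) : ℝ :=
  ∑' k : ℕ, (Real.Gamma (k + (ν + 1)))⁻¹ * (t ^ k / k !)

theorem besselI_eq_rpow_mul_besselClifford (ν : ℝ) {x : ℝ} (hx : 0 < x) :
    besselI ν x = (x / 2) ^ ν * besselClifford ν (x ^ 2 / 4) := by
  rw [besselI, besselClifford, ← tsum_mul_left]
  refine tsum_congr fun k => ?_
  have hpow : (x / 2) ^ (2 * (k : ℝ) + ν) = (x ^ 2 / 4) ^ k * (x / 2) ^ ν := by
    rw [Real.rpow_add (half_pos hx), Real.rpow_mul (half_pos hx).le, Real.rpow_natCast,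
      Real.rpow_two, div_pow]
    norm_num
  rw [hpow, ← add_assoc]
  field_simp

theorem hasDerivAt_besselClifford (ν t : ℝ) :
    HasDerivAt (besselClifford ν) (besselClifford (ν + 1) t) t := by
  obtain ⟨M, hM⟩ := exists_forall_abs_Gamma_natCast_add_inv_le (ν + 1)
  refine (hasDerivAt_tsum_mul_pow_div_factorial hM t).congr_deriv (tsum_congr fun k => ?_)
  rw [Nat.cast_succ, add_right_comm, add_assoc]

theorem continuous_besselClifford (ν : ℝ) : Continuous (besselClifford ν) :=
  continuous_iff_continuousAt.2 fun t => (hasDerivAt_besselClifford ν t).continuousAt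

theorem besselClifford_eq_add (ν t : ℝ) :
    besselClifford ν t =
      (ν + 1) * besselClifford (ν + 1) t + t * besselClifford (ν + 1 + 1) t := by
  obtain ⟨M, hM⟩ := exists_forall_abs_Gamma_natCast_add_inv_le (ν + 1 + 1)
  have hconst := (summable_mul_pow_div_factorial hM t).hasSum.mul_left (ν + 1)
  have hlin := hasSum_natCast_mul_pow_div_factorial hM t
  have hshift : ∀ k : ℕ, ((k + 1 : ℕ) : ℝ) + (ν + 1 + 1) = k + (ν + 1 + 1 + 1) := fun k => by
    push_cast; ring
  simp only [hshift] at hlin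
  refine (tsum_congr fun k => ?_).trans (hconst.add hlin).tsum_eq
  rw [Gamma_inv_eq_mul_Gamma_add_one_inv, add_assoc (k : ℝ)]
  ring

theorem besselClifford_pos {ν t : ℝ} (hν : -1 < ν) (ht : 0 ≤ t) : 0 < besselClifford ν t := by
  obtain ⟨M, hM⟩ := exists_forall_abs_Gamma_natCast_add_inv_le (ν + 1)
  have hν' : 0 < ν + 1 := by linarith
  have hcoeff : ∀ k : ℕ, 0 < (Real.Gamma (k + (ν + 1)))⁻¹ := fun k =>
    inv_pos.2 (Real.Gamma_pos_of_pos (by positivity))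
  refine (summable_mul_pow_div_factorial hM t).tsum_pos
    (fun k => mul_nonneg (hcoeff k).le (by positivity)) 0 ?_
  simpa using hcoeff 0

theorem hasDerivAt_rpow_mul_besselClifford (ν : ℝ) {t : ℝ} (ht : 0 < t) :
    HasDerivAt (fun u => u ^ (ν + 1) * besselClifford (ν + 1) u)
      (t ^ ν * besselClifford ν t) t := by
  have hpow : HasDerivAt (fun u : ℝ => u ^ (ν + 1)) ((ν + 1) * t ^ ν) t := by
    simpa using Real.hasDerivAt_rpow_const (p := ν + 1) (Or.inl ht.ne')
  refine (hpow.mul (hasDerivAt_besselClifford (ν + 1) t)).congr_deriv ?_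
  rw [besselClifford_eq_add ν t, Real.rpow_add_one ht.ne']
  ring

theorem besselI_sub_one_div_besselI {ν x : ℝ} (hν : -1 < ν) (hx : 0 < x) :
    besselI (ν - 1) x / besselI ν x =
      (2 * ν + 2 * (x ^ 2 / 4) *
        (besselClifford (ν + 1) (x ^ 2 / 4) / besselClifford ν (x ^ 2 / 4))) / x := by
  have hC : besselClifford ν (x ^ 2 / 4) ≠ 0 := (besselClifford_pos hν (by positivity)).ne'
  have hrec := besselClifford_eq_add (ν - 1) (x ^ 2 / 4)
  rw [sub_add_cancel] at hrec
  have hpow : (x / 2) ^ ν ≠ 0 := (Real.rpow_pos_of_pos (half_pos hx) ν).ne'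
  rw [besselI_eq_rpow_mul_besselClifford _ hx, besselI_eq_rpow_mul_besselClifford _ hx, hrec,
    Real.rpow_sub_one (half_pos hx).ne']
  field_simp

theorem lt_of_hasDerivAt_nonneg_of_exists_pos {f f' : ℝ → ℝ} {a b : ℝ}
    (hf : ContinuousOn f (Icc a b)) (hf' : ∀ u ∈ Ioo a b, HasDerivAt f (f' u) u)
    (hnonneg : ∀ u ∈ Ioo a b, 0 ≤ f' u) (hpos : ∃ u ∈ Ioo a b, 0 < f' u) : f a < f b := by
  obtain ⟨u, hu, hu'⟩ := hpos
  have hab : a ≤ b := (hu.1.trans hu.2).le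
  have hmono : MonotoneOn f (Icc a b) := by
    refine monotoneOn_of_hasDerivWithinAt_nonneg (f' := f') (convex_Icc a b) hf ?_ ?_ <;>
      rw [interior_Icc]
    exacts [fun v hv => (hf' v hv).hasDerivWithinAt, hnonneg]
  refine (hmono (left_mem_Icc.2 hab) (right_mem_Icc.2 hab) hab).lt_of_ne fun heq => hu'.ne' ?_
  have hconst : f =ᶠ[nhds u] fun _ => f a := by
    filter_upwards [Ioo_mem_nhds hu.1 hu.2] with v hv
    have hv' := Ioo_subset_Icc_self hv
    exact le_antisymm ((hmono hv' (right_mem_Icc.2 hab) hv.2.le).trans heq.ge)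
      (hmono (left_mem_Icc.2 hab) hv' hv.1.le)
  exact (hf' u hu).unique ((hasDerivAt_const u (f a)).congr_of_eventuallyEq hconst)

theorem hasDerivAt_riccati_comparison (ν : ℝ) {b : ℝ → ℝ} {b' t : ℝ} (hb : Continuous b)
    (ht : 0 < t) (hb' : HasDerivAt b b' t) :
    HasDerivAt
      (fun u =>
        (u ^ (ν + 1) * (b u * besselClifford ν u) - u ^ (ν + 1) * besselClifford (ν + 1) u) *
          Real.exp (∫ v in (0 : ℝ)..u, b v))
      (t ^ ν * besselClifford ν t * Real.exp (∫ v in (0 : ℝ)..t, b v) *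
        (t * b' + (ν + 1) * b t + t * b t ^ 2 - 1)) t := by
  have hpow : HasDerivAt (fun u : ℝ => u ^ (ν + 1)) ((ν + 1) * t ^ ν) t := by
    simpa using Real.hasDerivAt_rpow_const (p := ν + 1) (Or.inl ht.ne')
  have hexp := (hb.integral_hasStrictDerivAt 0 t).hasDerivAt.exp
  refine (((hpow.mul (hb'.mul (hasDerivAt_besselClifford ν t))).sub
    (hasDerivAt_rpow_mul_besselClifford ν ht)).mul hexp).congr_deriv ?_
  simp only [Pi.mul_apply, Pi.sub_apply, Real.rpow_add_one ht.ne']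
  ring

theorem besselClifford_add_one_lt_mul_of_riccati {ν t : ℝ} {b b' : ℝ → ℝ} (hν : -1 < ν)
    (hb : Continuous b) (hb' : ∀ u ∈ Ioo 0 t, HasDerivAt b (b' u) u)
    (hnonneg : ∀ u ∈ Ioo 0 t, 0 ≤ u * b' u + (ν + 1) * b u + u * b u ^ 2 - 1)
    (hpos : ∃ u ∈ Ioo 0 t, 0 < u * b' u + (ν + 1) * b u + u * b u ^ 2 - 1) :
    besselClifford (ν + 1) t < b t * besselClifford ν t := by
  have ht : 0 < t := let ⟨_, hu, _⟩ := hpos; hu.1.trans hu.2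
  have hweight : ∀ u ∈ Ioo 0 t,
      0 < u ^ ν * besselClifford ν u * Real.exp (∫ v in (0 : ℝ)..u, b v) := fun u hu =>
    mul_pos (mul_pos (Real.rpow_pos_of_pos hu.1 ν) (besselClifford_pos hν hu.1.le))
      (Real.exp_pos _)
  have hcont : Continuous fun u =>
      (u ^ (ν + 1) * (b u * besselClifford ν u) - u ^ (ν + 1) * besselClifford (ν + 1) u) *
        Real.exp (∫ v in (0 : ℝ)..u, b v) := by
    have hpow : Continuous fun u : ℝ => u ^ (ν + 1) := Real.continuous_rpow_const (by linarith)
    have : Continuous fun u => ∫ v in (0 : ℝ)..u, b v :=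
      intervalIntegral.continuous_primitive (fun _ _ => hb.intervalIntegrable _ _) 0
    have hC := continuous_besselClifford
    fun_prop
  have hlt := lt_of_hasDerivAt_nonneg_of_exists_pos hcont.continuousOn
    (fun u hu => hasDerivAt_riccati_comparison ν hb hu.1 (hb' u hu))
    (fun u hu => mul_nonneg (hweight u hu).le (hnonneg u hu))
    (hpos.imp fun u hu => ⟨hu.1, mul_pos (hweight u hu.1) hu.2⟩)
  simp only [Real.zero_rpow (by linarith : ν + 1 ≠ 0), zero_mul, sub_zero, ← mul_sub] at hlt
  exact sub_pos.1 (pos_of_mul_pos_right (pos_of_mul_pos_left hlt (Real.exp_pos _).le)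
    (Real.rpow_nonneg ht.le _))

/-- The root `b = 2c / (√(a² + 4ct) + a)` of `t b² + a b = c`, used as a supersolution of the
Riccati equation satisfied by `C_{ν+1}/C_ν`; this form of the root makes sense at `t = 0`. -/
noncomputable def riccatiBound (a c t : ℝ) : ℝ :=
  2 * c / (√(a ^ 2 + 4 * c * t) + a)

section RiccatiBound

variable {a c t : ℝ}

theorem continuous_riccatiBound (ha : 0 < a) (c : ℝ) : Continuous (riccatiBound a c) :=
  continuous_const.div (by fun_prop) fun _ => (add_pos_of_nonneg_of_pos (Real.sqrt_nonneg _) ha).ne'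

theorem hasDerivAt_riccatiBound (ha : 0 < a) (ht : 0 < a ^ 2 + 4 * c * t) :
    HasDerivAt (riccatiBound a c)
      (-riccatiBound a c t ^ 2 / √(a ^ 2 + 4 * c * t)) t := by
  have : 0 < √(a ^ 2 + 4 * c * t) := Real.sqrt_pos.2 ht
  have hsqrt : HasDerivAt (fun u => √(a ^ 2 + 4 * c * u)) (4 * c / (2 * √(a ^ 2 + 4 * c * t))) t :=
    HasDerivAt.sqrt (by simpa using ((hasDerivAt_id t).const_mul (4 * c)).const_add (a ^ 2)) ht.ne'
  refine ((hasDerivAt_const t (2 * c)).div (hsqrt.add_const a) (by positivity)).congr_deriv ?_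
  rw [riccatiBound]
  field_simp
  ring

theorem two_mul_mul_riccatiBound (ha : 0 < a) (ht : 0 ≤ a ^ 2 + 4 * c * t) :
    2 * t * riccatiBound a c t = √(a ^ 2 + 4 * c * t) - a := by
  have hsq := Real.sq_sqrt ht
  rw [riccatiBound, ← mul_div_assoc, div_eq_iff (by positivity)]
  linarith

theorem riccatiBound_defect {ν m d : ℝ} (ha : a = ν + m ^ 2 / 2)
    (hd : d = ν - m ^ 2 / 2 + 2 * m - 1) (ha0 : 0 < a) (hd0 : 0 < d) (ht : 0 ≤ t) :
    t * (-riccatiBound a (a / d) t ^ 2 / √(a ^ 2 + 4 * (a / d) * t)) +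
        (ν + 1) * riccatiBound a (a / d) t + t * riccatiBound a (a / d) t ^ 2 - 1 =
      ((m - 1) * √(a ^ 2 + 4 * (a / d) * t) - a) ^ 2 /
        (d * √(a ^ 2 + 4 * (a / d) * t) * (√(a ^ 2 + 4 * (a / d) * t) + a)) := by
  have hsq : √(a ^ 2 + 4 * (a / d) * t) ^ 2 = a ^ 2 + 4 * (a / d) * t :=
    Real.sq_sqrt (by positivity)
  have hs : 0 < √(a ^ 2 + 4 * (a / d) * t) := by positivity
  rw [riccatiBound]
  generalize √(a ^ 2 + 4 * (a / d) * t) = s at hsq hs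
  obtain rfl : t = (s ^ 2 - a ^ 2) * d / (4 * a) := by
    rw [hsq]
    field_simp
    ring
  obtain rfl : ν = a - m ^ 2 / 2 := by linarith
  field_simp
  rw [hd]
  ring

theorem exists_mul_sqrt_ne (k : ℝ) (ha : a ≠ 0) (hc : 0 < c) (ht : 0 < t) :
    ∃ u ∈ Ioo 0 t, k * √(a ^ 2 + 4 * c * u) ≠ a := by
  by_contra! h
  have h2 := h (t / 2) ⟨by linarith, by linarith⟩
  have h3 := h (t / 3) ⟨by linarith, by linarith⟩
  have hk : k ≠ 0 := left_ne_zero_of_mul (h2.trans_ne ha)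
  have hs := mul_left_cancel₀ hk (h2.trans h3.symm)
  rw [Real.sqrt_inj (by positivity) (by positivity)] at hs
  nlinarith [mul_pos hc ht]

end RiccatiBound

theorem besselClifford_add_one_lt_riccatiBound_mul {ν m a d t : ℝ} (ha : a = ν + m ^ 2 / 2)
    (hd : d = ν - m ^ 2 / 2 + 2 * m - 1) (hd0 : 0 < d) (ht : 0 < t) :
    besselClifford (ν + 1) t < riccatiBound a (a / d) t * besselClifford ν t := by
  have hν : -1 < ν := by linarith [sq_nonneg (m - 2)]
  have ha0 : 0 < a := by linarith [sq_nonneg (m - 1)]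
  have hc0 : 0 < a / d := div_pos ha0 hd0
  have hs : ∀ u ∈ Ioo 0 t, 0 < √(a ^ 2 + 4 * (a / d) * u) := fun u hu => by
    have := hu.1
    positivity
  refine besselClifford_add_one_lt_mul_of_riccati hν (continuous_riccatiBound ha0 _)
    (fun u hu => hasDerivAt_riccatiBound ha0 (Real.sqrt_pos.1 (hs u hu))) (fun u hu => ?_) ?_
  · have := hs u hu
    rw [riccatiBound_defect ha hd ha0 hd0 hu.1.le]
    positivity
  · obtain ⟨u, hu, hne⟩ := exists_mul_sqrt_ne (m - 1) ha0.ne' hc0 ht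
    have := hs u hu
    have := sub_ne_zero.2 hne
    refine ⟨u, hu, ?_⟩
    rw [riccatiBound_defect ha hd ha0 hd0 hu.1.le]
    positivity

theorem add_one_lt_two_mul_sqrt_two_mul {lam : ℝ} (hlam : lam ∈ Icc (1 / 2) 2) :
    lam + 1 < 2 * √(2 * lam) := by
  obtain ⟨hl, hu⟩ := hlam
  have hsq : ((lam + 1) / 2) ^ 2 < 2 * lam := by nlinarith
  linarith [Real.lt_sqrt_of_sq_lt hsq]

theorem besselI_ratio_close_to_best_upper_general {ν lam x : ℝ} (hlam : 0 ≤ lam)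
    (hd : 0 < ν - lam + 2 * √(2 * lam) - 1) (hx : 0 < x) :
    besselI (ν - 1) x / besselI ν x <
      (ν - lam + √((ν + lam) ^ 2 + ((ν + lam) / (ν - lam + 2 * √(2 * lam) - 1)) * x ^ 2)) / x := by
  have hm : √(2 * lam) ^ 2 / 2 = lam := by rw [Real.sq_sqrt (by linarith)]; ring
  generalize √(2 * lam) = m at hd hm ⊢
  subst hm
  set a := ν + m ^ 2 / 2 with ha
  set d := ν - m ^ 2 / 2 + 2 * m - 1 with hd'
  have hν : -1 < ν := by linarith [sq_nonneg (m - 2)]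
  have ha0 : 0 < a := by linarith [sq_nonneg (m - 1)]
  have ht : 0 < x ^ 2 / 4 := by positivity
  have hC := besselClifford_add_one_lt_riccatiBound_mul ha hd' hd ht
  rw [← div_lt_iff₀ (besselClifford_pos hν ht.le)] at hC
  calc besselI (ν - 1) x / besselI ν x
      = (2 * ν + 2 * (x ^ 2 / 4) *
          (besselClifford (ν + 1) (x ^ 2 / 4) / besselClifford ν (x ^ 2 / 4))) / x :=
        besselI_sub_one_div_besselI hν hx
    _ < (2 * ν + 2 * (x ^ 2 / 4) * riccatiBound a (a / d) (x ^ 2 / 4)) / x := by gcongr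
    _ = (ν - m ^ 2 / 2 + √(a ^ 2 + a / d * x ^ 2)) / x := by
        rw [two_mul_mul_riccatiBound ha0 (by positivity),
          show 4 * (a / d) * (x ^ 2 / 4) = a / d * x ^ 2 by ring, ha]
        ring

theorem besselI_ratio_close_to_best_upper (ν lam x : ℝ) (hν : 0 ≤ ν)
    (hlam : lam ∈ Set.Icc (1 / 2 : ℝ) 2) (hx : 0 < x) :
    besselI (ν - 1) x / besselI ν x <
      (ν - lam +
          Real.sqrt ((ν + lam) ^ 2 +
            ((ν + lam) / (ν - lam + 2 * Real.sqrt (2 * lam) - 1)) * x ^ 2)) / x :=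
  besselI_ratio_close_to_best_upper_general (by linarith [hlam.1])
    (by linarith [add_one_lt_two_mul_sqrt_two_mul hlam]) hx
end
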